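/- Let K ≥ 3 and d ≥ 1, let (P_ul, G_ul) be a likelihood model whose representation ability satisfies R(P_ul, G_ul) ⊆ {p : ℝ^d → Δ̂_{K-1}^∅}, let G_K = {g : ℝ^d → ℝ^K}, and for r ∈ [0,1] define the mixture model P_maul,r(y; (g_1(x), g_2(x))) = (1−r)·P_ul(y; g_1(x)) + r·P_sl(y; g_2(x)) over the learner class G_ul,K = {(g_1, g_2) : g_1 ∈ G_ul, g_2 ∈ G_K}. Then R(P_ul, G_ul) ⊆ R(P_maul,r, G_ul,K), i.e., every conditional-probability map representable by the unimodal model is representable by the mixture model at any mixture rate r ∈ [0,1]. -/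

import Mathlib

open scoped BigOperators

noncomputable section

/-- The probability simplex Δ_{K-1} ⊆ ℝ^K. -/
def simplex (K : ℕ) : Set (Fin K → ℝ) :=
  {p | (∑ k, p k) = 1 ∧ ∀ k, 0 ≤ p k ∧ p k ≤ 1}

/-- A PMF (vector) is unimodal: there is a mode M such that p is
nondecreasing up to M and nonincreasing after M. -/
def Unimodal {K : ℕ} (p : Fin K → ℝ) : Prop :=
  ∃ M : Fin K, (∀ k, p k ≤ p M) ∧
    (∀ i j : Fin K, i ≤ j → j ≤ M → p i ≤ p j) ∧
    (∀ i j : Fin K, M ≤ i → i ≤ j → p j ≤ p i)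

/-- Δ̂_{K-1}: the set of unimodal PMFs. -/
def uniSimplex (K : ℕ) : Set (Fin K → ℝ) :=
  {p | p ∈ simplex K ∧ Unimodal p}

/-- The stereotype logit (SL) link function. -/
def Psl {K : ℕ} (u : Fin K → ℝ) (y : Fin K) : ℝ :=
  Real.exp (-(u y)) / ∑ k, Real.exp (-(u k))

/-- The ordering transform ρ[u]: (ρ[u])_1 = u_1, (ρ[u])_k = (ρ[u])_{k-1} + ρ(u_k). -/
def ordT (ρ : ℝ → ℝ) {K : ℕ} (u : Fin K → ℝ) : Fin K → ℝ :=
  fun k => u ⟨0, k.pos⟩ +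
    ∑ j ∈ Finset.univ.filter (fun j : Fin K => 0 < (j : ℕ) ∧ (j : ℕ) ≤ (k : ℕ)), ρ (u j)

/-- The Euclidean norm on ℝ^K. -/
def euclNorm {K : ℕ} (u : Fin K → ℝ) : ℝ :=
  Real.sqrt (∑ k, (u k) ^ 2)

/-- Euclidean distance from a point to a set. -/
def DH {K : ℕ} (u : Fin K → ℝ) (S : Set (Fin K → ℝ)) : ℝ :=
  sInf ((fun v => euclNorm (u - v)) '' S)

/-- A strictly positive PMF `p` is the SL link evaluated at `u = -log p`: the numerators
`exp (-u k)` are then `p k`, and the normalizing sum is `1`. -/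
lemma Psl_neg_log {K : ℕ} (p : Fin K → ℝ) (hsum : ∑ k, p k = 1) (hpos : ∀ k, 0 < p k)
    (y : Fin K) : Psl (fun k => -Real.log (p k)) y = p y := by
  simp only [Psl, neg_neg, Real.exp_log (hpos _), hsum, div_one]

/-- every conditional-probability map representable by a
unimodal likelihood model (P_ul, G_ul) is representable by the mixture model
P_maul,r at any mixture rate r ∈ [0,1]. -/
theorem stmt8 (K d : ℕ) (hK : 3 ≤ K) (hd : 1 ≤ d)
    {α : Type*} (Pul : α → Fin K → ℝ) (Gul : Set ((Fin d → ℝ) → α))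
    (hrep : ∀ g ∈ Gul, ∀ x : Fin d → ℝ,
      (fun y => Pul (g x) y) ∈ uniSimplex K ∧ ∀ y, Pul (g x) y ≠ 0)
    (r : ℝ) (hr0 : 0 ≤ r) (hr1 : r ≤ 1) :
    {P : (Fin d → ℝ) → Fin K → ℝ | ∃ g ∈ Gul, ∀ x y, P x y = Pul (g x) y}
      ⊆ {P : (Fin d → ℝ) → Fin K → ℝ |
          ∃ g1 ∈ Gul, ∃ g2 : (Fin d → ℝ) → Fin K → ℝ,
            ∀ x y, P x y = (1 - r) * Pul (g1 x) y + r * Psl (g2 x) y} := by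
  rintro P ⟨g, hg, hP⟩
  -- With both components equal to the represented PMF, the mixture is that PMF for every `r`.
  refine ⟨g, hg, fun x k => -Real.log (Pul (g x) k), fun x y => ?_⟩
  obtain ⟨⟨⟨hsum, hbd⟩, -⟩, hne⟩ := hrep g hg x
  rw [Psl_neg_log (Pul (g x)) hsum (fun k => lt_of_le_of_ne (hbd k).1 (hne k).symm) y, hP x y]
  ring
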